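/- Let A₁ ⊆ B(H₁) and A₂ ⊆ B(H₂) be C*-algebras of operators. For x in the algebraic tensor product A₁ ⊗ A₂, define ‖x‖ as the operator norm of the induced operator on the Hilbert space tensor product H₁ ⊗ H₂. Then this defines a submultiplicative norm on A₁ ⊗ A₂ satisfying the C*-identity ‖x* x‖ = ‖x‖², and on elementary tensors ‖a ⊗ b‖ = ‖a‖ ‖b‖. -/

import Mathlib

open scoped InnerProductSpace
open TensorProduct

/-!
The operators `Ψ x` restrict, along the isometric dense embedding of the algebraic tensor product
`H₁ ⊗ H₂` into `E`, to operators `Φ x = ∑ aᵢ ⊗ bᵢ` on that pre-Hilbert space, so `‖Ψ x‖ = ‖Φ x‖`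
and everything can be checked there. Since `Φ` is multiplicative and `Φ (x*)` is a formal adjoint
of `Φ x`, the norm is submultiplicative and satisfies the C*-identity. Injectivity of `Φ` is linear
algebra: a tensor of operators is determined by its slices along the functionals `f ↦ ψ (f ξ)`,
and these slices can be read off from the operator.
-/

section Algebra

variable {R K M N P Q ι : Type*} [CommRing R] [Field K]

theorem eq_zero_of_forall_lid_rTensor_eq_zero [AddCommGroup M] [Module R M]
    [AddCommGroup N] [Module R N] [Module.Free R N] {φ : ι → M →ₗ[R] R}
    (hφ : ∀ m, (∀ i, φ i m = 0) → m = 0) {x : M ⊗[R] N}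
    (hx : ∀ i, TensorProduct.lid R N ((φ i).rTensor N x) = 0) : x = 0 := by
  classical
  let b := Module.Free.chooseBasis R N
  have apply_coeff (i) (k) (y : M ⊗[R] N) :
      φ i (equivFinsuppOfBasisRight b y k) =
        b.repr (TensorProduct.lid R N ((φ i).rTensor N y)) k := by
    induction y with
    | zero => simp
    | tmul m n => simp [mul_comm]
    | add y z hy hz => simp_all
  refine (equivFinsuppOfBasisRight b).map_eq_zero_iff.mp (Finsupp.ext fun k ↦ hφ _ fun i ↦ ?_)
  rw [apply_coeff, hx, map_zero, Finsupp.zero_apply]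

variable [AddCommGroup M] [Module K M] [AddCommGroup N] [Module K N]
  [AddCommGroup P] [Module K P] [AddCommGroup Q] [Module K Q]

theorem homTensorHomMap_injective :
    Function.Injective (homTensorHomMap (RingHom.id K) M N P Q) := by
  refine (injective_iff_map_eq_zero _).mpr fun x hx ↦ ?_
  let φ (p : M × Module.Dual K P) : (M →ₗ[K] P) →ₗ[K] K := p.2 ∘ₗ LinearMap.applyₗ p.1
  have slice_apply (p) (n : N) (y : (M →ₗ[K] P) ⊗[K] (N →ₗ[K] Q)) :
      TensorProduct.lid K _ ((φ p).rTensor _ y) n =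
        TensorProduct.lid K Q (p.2.rTensor Q (homTensorHomMap (.id K) M N P Q y (p.1 ⊗ₜ n))) := by
    induction y with
    | zero => simp
    | tmul f g => simp [φ]
    | add y z hy hz => simp [hy, hz]
  refine eq_zero_of_forall_lid_rTensor_eq_zero (φ := φ) (fun f hf ↦ ?_) fun p ↦ ?_
  · exact LinearMap.ext fun m ↦
      (Module.forall_dual_apply_eq_zero_iff K (f m)).mp fun ψ ↦ hf (m, ψ)
  · exact LinearMap.ext fun n ↦ by simp [slice_apply, hx]

end Algebra

section OperatorNorm

variable {𝕜 E F G H : Type*}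

theorem mul_opNorm_le_of_forall [NontriviallyNormedField 𝕜]
    [SeminormedAddCommGroup E] [NormedSpace 𝕜 E] [SeminormedAddCommGroup F] [NormedSpace 𝕜 F]
    {f : E →L[𝕜] F} {c C : ℝ} (hc : 0 ≤ c) (hC : 0 ≤ C) (h : ∀ x, c * ‖f x‖ ≤ C * ‖x‖) :
    c * ‖f‖ ≤ C := by
  obtain rfl | hc := hc.eq_or_lt
  · simpa using hC
  rw [← le_div_iff₀' hc]
  refine f.opNorm_le_bound (by positivity) fun x ↦ ?_
  rw [div_mul_eq_mul_div, le_div_iff₀' hc]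
  exact h x

theorem opNorm_eq_of_comp_linearIsometry_eq [NontriviallyNormedField 𝕜]
    [SeminormedAddCommGroup E] [NormedSpace 𝕜 E] [SeminormedAddCommGroup F] [NormedSpace 𝕜 F]
    [SeminormedAddCommGroup G] [NormedSpace 𝕜 G] [SeminormedAddCommGroup H] [NormedSpace 𝕜 H]
    {T : F →L[𝕜] H} {S : E →L[𝕜] G} {U : E →ₗᵢ[𝕜] F} {V : G →ₗᵢ[𝕜] H} (hU : DenseRange U)
    (h : ∀ z, T (U z) = V (S z)) : ‖T‖ = ‖S‖ := by
  have norm_apply (z) : ‖T (U z)‖ = ‖S z‖ := by rw [h, V.norm_map]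
  refine le_antisymm (T.opNorm_le_bound (norm_nonneg S) ?_)
    (S.opNorm_le_bound (norm_nonneg T) fun z ↦ ?_)
  · refine isClosed_property hU (isClosed_le (by fun_prop) (by fun_prop)) fun z ↦ ?_
    rw [norm_apply, U.norm_map]
    exact S.le_opNorm z
  · rw [← norm_apply, ← U.norm_map]
    exact T.le_opNorm _

variable [RCLike 𝕜] [SeminormedAddCommGroup E] [InnerProductSpace 𝕜 E]
  [SeminormedAddCommGroup F] [InnerProductSpace 𝕜 F]

theorem opNorm_sq_le_of_inner_eq {T : E →L[𝕜] F} {S : F →L[𝕜] E}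
    (h : ∀ x y, ⟪S y, x⟫_𝕜 = ⟪y, T x⟫_𝕜) : ‖T‖ ^ 2 ≤ ‖S ∘L T‖ := by
  refine (Real.le_sqrt (norm_nonneg T) (norm_nonneg _)).mp <|
    T.opNorm_le_bound (Real.sqrt_nonneg _) fun x ↦ le_of_sq_le_sq ?_ (by positivity)
  calc ‖T x‖ ^ 2 = RCLike.re ⟪(S ∘L T) x, x⟫_𝕜 := by
        rw [ContinuousLinearMap.comp_apply, h, inner_self_eq_norm_sq]
    _ ≤ ‖(S ∘L T) x‖ * ‖x‖ := re_inner_le_norm _ _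
    _ ≤ ‖S ∘L T‖ * ‖x‖ * ‖x‖ := by gcongr; exact (S ∘L T).le_opNorm x
    _ = (√‖S ∘L T‖ * ‖x‖) ^ 2 := by rw [mul_pow, Real.sq_sqrt (norm_nonneg _)]; ring

theorem opNorm_le_of_inner_eq {T : E →L[𝕜] F} {S : F →L[𝕜] E}
    (h : ∀ x y, ⟪S y, x⟫_𝕜 = ⟪y, T x⟫_𝕜) : ‖T‖ ≤ ‖S‖ := by
  have := (opNorm_sq_le_of_inner_eq h).trans (S.opNorm_comp_le T)
  nlinarith [norm_nonneg T, norm_nonneg S]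

theorem opNorm_comp_eq_sq_of_inner_eq {T : E →L[𝕜] F} {S : F →L[𝕜] E}
    (h : ∀ x y, ⟪S y, x⟫_𝕜 = ⟪y, T x⟫_𝕜) : ‖S ∘L T‖ = ‖T‖ ^ 2 := by
  have h_symm (y x) : ⟪T x, y⟫_𝕜 = ⟪x, S y⟫_𝕜 := by
    rw [← inner_conj_symm, ← h, inner_conj_symm]
  refine le_antisymm ?_ (opNorm_sq_le_of_inner_eq h)
  calc ‖S ∘L T‖ ≤ ‖S‖ * ‖T‖ := S.opNorm_comp_le T
    _ ≤ ‖T‖ * ‖T‖ := by gcongr; exact opNorm_le_of_inner_eq h_symm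
    _ = ‖T‖ ^ 2 := (sq _).symm

end OperatorNorm

section HilbertTensor

variable {𝕜 E F G H : Type*} [RCLike 𝕜]
  [NormedAddCommGroup E] [InnerProductSpace 𝕜 E] [NormedAddCommGroup F] [InnerProductSpace 𝕜 F]
  [NormedAddCommGroup G] [InnerProductSpace 𝕜 G] [NormedAddCommGroup H] [InnerProductSpace 𝕜 H]

theorem norm_mapL (f : E →L[𝕜] F) (g : G →L[𝕜] H) : ‖mapL f g‖ = ‖f‖ * ‖g‖ := by
  refine le_antisymm (norm_mapL_le f g) ?_
  refine mul_opNorm_le_of_forall (norm_nonneg f) (norm_nonneg _) fun y ↦ ?_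
  rw [mul_comm]
  refine mul_opNorm_le_of_forall (norm_nonneg _) (by positivity) fun x ↦ ?_
  calc ‖g y‖ * ‖f x‖ = ‖mapL f g (x ⊗ₜ y)‖ := by rw [mapL_tmul, norm_tmul, mul_comm]
    _ ≤ ‖mapL f g‖ * ‖x ⊗ₜ[𝕜] y‖ := (mapL f g).le_opNorm _
    _ = ‖mapL f g‖ * ‖y‖ * ‖x‖ := by rw [norm_tmul]; ring

/-- The isometry `ξ ⊗ₜ η ↦ t ξ η` of the algebraic tensor product, with its Hilbert cross inner
product, into a model of the Hilbert space tensor product with elementary tensors `t ξ η`. -/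
noncomputable def liftIsometry (t : F →ₗ[𝕜] G →ₗ[𝕜] E)
    (ht : ∀ ξ ξ' η η', ⟪t ξ η, t ξ' η'⟫_𝕜 = ⟪ξ, ξ'⟫_𝕜 * ⟪η, η'⟫_𝕜) : F ⊗[𝕜] G →ₗᵢ[𝕜] E :=
  (lift t).isometryOfInner fun x y ↦ by
    induction x with
    | zero => simp
    | add x x' hx hx' => simp only [map_add, inner_add_left, hx, hx']
    | tmul ξ η =>
      induction y with
      | zero => simp
      | add y y' hy hy' => simp only [map_add, inner_add_right, hy, hy']
      | tmul ξ' η' => simp [ht]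

variable {t : F →ₗ[𝕜] G →ₗ[𝕜] E}
  (ht : ∀ ξ ξ' η η', ⟪t ξ η, t ξ' η'⟫_𝕜 = ⟪ξ, ξ'⟫_𝕜 * ⟪η, η'⟫_𝕜)

@[simp]
theorem liftIsometry_tmul (ξ : F) (η : G) : liftIsometry t ht (ξ ⊗ₜ η) = t ξ η := rfl

theorem denseRange_liftIsometry
    (hd : Dense (Submodule.span 𝕜 {x : E | ∃ ξ η, x = t ξ η} : Set E)) :
    DenseRange (liftIsometry t ht) := by
  have span_le_range : Submodule.span 𝕜 {x : E | ∃ ξ η, x = t ξ η} ≤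
      LinearMap.range (liftIsometry t ht).toLinearMap := by
    rw [Submodule.span_le]
    rintro _ ⟨ξ, η, rfl⟩
    exact ⟨ξ ⊗ₜ η, rfl⟩
  exact hd.mono span_le_range

end HilbertTensor

section TensorRep

variable {𝕜 A B E F G H : Type*} [RCLike 𝕜]
  [NormedAddCommGroup E] [InnerProductSpace 𝕜 E] [NormedAddCommGroup F] [InnerProductSpace 𝕜 F]
  [NormedAddCommGroup G] [InnerProductSpace 𝕜 G] [NormedAddCommGroup H] [InnerProductSpace 𝕜 H]

section Linear

variable [AddCommMonoid A] [Module 𝕜 A] [AddCommMonoid B] [Module 𝕜 B]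

/-- The tensor product `a ⊗ₜ b ↦ f a ⊗ g b` of two families of operators, acting on the algebraic
tensor product of their domains, which carries the Hilbert cross inner product and is not
completed. -/
noncomputable def tensorRep (f : A →ₗ[𝕜] E →L[𝕜] F) (g : B →ₗ[𝕜] G →L[𝕜] H) :
    A ⊗[𝕜] B →ₗ[𝕜] (E ⊗[𝕜] G →L[𝕜] F ⊗[𝕜] H) :=
  lift <| LinearMap.mk₂ 𝕜 (fun a b ↦ mapL (f a) (g b))
    (by simp [mapL_add_left]) (by simp [mapL_smul_left])
    (by simp [mapL_add_right]) (by simp [mapL_smul_right])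

@[simp]
theorem tensorRep_tmul (f : A →ₗ[𝕜] E →L[𝕜] F) (g : B →ₗ[𝕜] G →L[𝕜] H) (a : A) (b : B) :
    tensorRep f g (a ⊗ₜ b) = mapL (f a) (g b) := rfl

theorem apply_liftIsometry_eq_liftIsometry_tensorRep {t : F →ₗ[𝕜] G →ₗ[𝕜] E}
    (ht : ∀ ξ ξ' η η', ⟪t ξ η, t ξ' η'⟫_𝕜 = ⟪ξ, ξ'⟫_𝕜 * ⟪η, η'⟫_𝕜)
    {f : A →ₗ[𝕜] F →L[𝕜] F} {g : B →ₗ[𝕜] G →L[𝕜] G} {Ψ : A ⊗[𝕜] B →ₗ[𝕜] E →L[𝕜] E}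
    (hΨ : ∀ a b ξ η, Ψ (a ⊗ₜ b) (t ξ η) = t (f a ξ) (g b η)) (x : A ⊗[𝕜] B) (z : F ⊗[𝕜] G) :
    Ψ x (liftIsometry t ht z) = liftIsometry t ht (tensorRep f g x z) := by
  induction x with
  | zero => simp
  | add x y hx hy => simp [hx, hy]
  | tmul a b =>
    induction z with
    | zero => simp
    | add z w hz hw => simp only [map_add, hz, hw]
    | tmul ξ η => simp [hΨ]

end Linear

theorem tensorRep_injective [AddCommGroup A] [Module 𝕜 A] [AddCommGroup B] [Module 𝕜 B]
    {f : A →ₗ[𝕜] E →L[𝕜] F} {g : B →ₗ[𝕜] G →L[𝕜] H}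
    (hf : Function.Injective f) (hg : Function.Injective g) :
    Function.Injective (tensorRep f g) := by
  let f' := ContinuousLinearMap.coeLM 𝕜 ∘ₗ f
  let g' := ContinuousLinearMap.coeLM 𝕜 ∘ₗ g
  have coe_tensorRep : ContinuousLinearMap.coeLM 𝕜 ∘ₗ tensorRep f g =
      homTensorHomMap (.id 𝕜) E G F H ∘ₗ TensorProduct.map f' g' :=
    TensorProduct.ext' fun a b ↦ toLinearMap_mapL (f a) (g b)
  have map_injective : Function.Injective (TensorProduct.map f' g') :=
    map_injective_of_flat_flat _ _ (ContinuousLinearMap.coe_injective.comp hf)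
      (ContinuousLinearMap.coe_injective.comp hg)
  refine Function.Injective.of_comp (f := ContinuousLinearMap.coeLM 𝕜) ?_
  rw [← LinearMap.coe_comp, coe_tensorRep]
  exact homTensorHomMap_injective.comp map_injective

section Mul

variable [NonUnitalNonAssocSemiring A] [Module 𝕜 A] [SMulCommClass 𝕜 A A] [IsScalarTower 𝕜 A A]
  [NonUnitalNonAssocSemiring B] [Module 𝕜 B] [SMulCommClass 𝕜 B B] [IsScalarTower 𝕜 B B]

theorem tensorRep_mul {f : A →ₗ[𝕜] E →L[𝕜] E} {g : B →ₗ[𝕜] F →L[𝕜] F}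
    (hf : ∀ a a', f (a * a') = f a * f a') (hg : ∀ b b', g (b * b') = g b * g b')
    (x y : A ⊗[𝕜] B) : tensorRep f g (x * y) = tensorRep f g x * tensorRep f g y := by
  induction x with
  | zero => simp
  | add x x' hx hx' => simp only [add_mul, map_add, hx, hx']
  | tmul a b =>
    induction y with
    | zero => simp
    | add y y' hy hy' => simp only [mul_add, map_add, hy, hy']
    | tmul a' b' => simp [hf, hg, mapL_mul]

end Mul

theorem inner_tensorRep_star_left [AddCommMonoid A] [Module 𝕜 A] [Star A]
    [AddCommMonoid B] [Module 𝕜 B] [Star B]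
    {f : A →ₗ[𝕜] E →L[𝕜] E} {g : B →ₗ[𝕜] F →L[𝕜] F}
    (hf : ∀ a ξ ξ', ⟪f (star a) ξ, ξ'⟫_𝕜 = ⟪ξ, f a ξ'⟫_𝕜)
    (hg : ∀ b η η', ⟪g (star b) η, η'⟫_𝕜 = ⟪η, g b η'⟫_𝕜)
    {st : A ⊗[𝕜] B →+ A ⊗[𝕜] B} (hst : ∀ a b, st (a ⊗ₜ b) = star a ⊗ₜ star b)
    (x : A ⊗[𝕜] B) (z w : E ⊗[𝕜] F) :
    ⟪tensorRep f g (st x) z, w⟫_𝕜 = ⟪z, tensorRep f g x w⟫_𝕜 := by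
  induction x with
  | zero => simp
  | add x y hx hy =>
    simp only [map_add, add_apply, inner_add_left, inner_add_right, hx, hy]
  | tmul a b =>
    induction z with
    | zero => simp
    | add z z' hz hz' => simp only [map_add, inner_add_left, hz, hz']
    | tmul ξ η =>
      induction w with
      | zero => simp
      | add w w' hw hw' => simp only [map_add, inner_add_right, hw, hw']
      | tmul ξ' η' => simp [hst, hf, hg]

end TensorRep

-- The representations are `*`-preserving in the sense of inner products, because on an incomplete
-- space a bounded operator need not have an adjoint.
theorem stmt_17_general {𝕜 A₁ A₂ H₁ H₂ E : Type*} [RCLike 𝕜]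
    [NormedAddCommGroup H₁] [InnerProductSpace 𝕜 H₁]
    [NormedAddCommGroup H₂] [InnerProductSpace 𝕜 H₂]
    [NormedAddCommGroup E] [InnerProductSpace 𝕜 E]
    [NonUnitalRing A₁] [Module 𝕜 A₁] [SMulCommClass 𝕜 A₁ A₁] [IsScalarTower 𝕜 A₁ A₁] [Star A₁]
    [NonUnitalRing A₂] [Module 𝕜 A₂] [SMulCommClass 𝕜 A₂ A₂] [IsScalarTower 𝕜 A₂ A₂] [Star A₂]
    (tmul : H₁ →ₗ[𝕜] H₂ →ₗ[𝕜] E)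
    (hinner : ∀ (ξ ξ' : H₁) (η η' : H₂),
      ⟪tmul ξ η, tmul ξ' η'⟫_𝕜 = ⟪ξ, ξ'⟫_𝕜 * ⟪η, η'⟫_𝕜)
    (hdense : Dense (↑(Submodule.span 𝕜 {x : E | ∃ ξ η, x = tmul ξ η}) : Set E))
    (π₁ : A₁ →ₙₐ[𝕜] H₁ →L[𝕜] H₁) (hπ₁ : Function.Injective π₁)
    (hstar₁ : ∀ a ξ ξ', ⟪π₁ (star a) ξ, ξ'⟫_𝕜 = ⟪ξ, π₁ a ξ'⟫_𝕜)
    (π₂ : A₂ →ₙₐ[𝕜] H₂ →L[𝕜] H₂) (hπ₂ : Function.Injective π₂)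
    (hstar₂ : ∀ b η η', ⟪π₂ (star b) η, η'⟫_𝕜 = ⟪η, π₂ b η'⟫_𝕜)
    (Ψ : A₁ ⊗[𝕜] A₂ →ₗ[𝕜] (E →L[𝕜] E))
    (hΨ : ∀ a b ξ η, Ψ (a ⊗ₜ b) (tmul ξ η) = tmul (π₁ a ξ) (π₂ b η))
    (st : A₁ ⊗[𝕜] A₂ →+ A₁ ⊗[𝕜] A₂) (hst : ∀ a b, st (a ⊗ₜ b) = star a ⊗ₜ star b) :
    Function.Injective Ψ ∧
    (∀ x y : A₁ ⊗[𝕜] A₂, ‖Ψ (x * y)‖ ≤ ‖Ψ x‖ * ‖Ψ y‖) ∧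
    (∀ x : A₁ ⊗[𝕜] A₂, ‖Ψ (st x * x)‖ = ‖Ψ x‖ ^ 2) ∧
    (∀ (a : A₁) (b : A₂), ‖Ψ (a ⊗ₜ b)‖ = ‖π₁ a‖ * ‖π₂ b‖) := by
  let Φ := tensorRep (π₁ : A₁ →ₗ[𝕜] H₁ →L[𝕜] H₁) (π₂ : A₂ →ₗ[𝕜] H₂ →L[𝕜] H₂)
  have norm_Ψ (x) : ‖Ψ x‖ = ‖Φ x‖ :=
    opNorm_eq_of_comp_linearIsometry_eq (denseRange_liftIsometry hinner hdense)
      (apply_liftIsometry_eq_liftIsometry_tensorRep hinner hΨ x)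
  have Φ_mul (x y) : Φ (x * y) = Φ x * Φ y := tensorRep_mul (map_mul π₁) (map_mul π₂) x y
  refine ⟨?_, fun x y ↦ ?_, fun x ↦ ?_, fun a b ↦ ?_⟩
  · refine (injective_iff_map_eq_zero Ψ).mpr fun x hx ↦ ?_
    have Φ_eq_zero : Φ x = 0 := by rw [← norm_eq_zero, ← norm_Ψ, hx, norm_zero]
    exact (map_eq_zero_iff Φ (tensorRep_injective hπ₁ hπ₂)).mp Φ_eq_zero
  · rw [norm_Ψ, norm_Ψ, norm_Ψ, Φ_mul]
    exact norm_mul_le _ _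
  · rw [norm_Ψ, norm_Ψ, Φ_mul]
    exact opNorm_comp_eq_sq_of_inner_eq fun z w ↦ inner_tensorRep_star_left hstar₁ hstar₂ hst x w z
  · rw [norm_Ψ]
    exact norm_mapL (π₁ a) (π₂ b)

/-- The minimal (spatial) tensor norm: `E` plays the role of the Hilbert space
tensor product `H₁ ⊗ H₂` (with `tmul` the elementary-tensor map), `A₁ ⊆ B(H₁)`,
`A₂ ⊆ B(H₂)` are C*-algebras of operators, `Ψ` is the induced linear map of the
algebraic tensor product into `B(E)` and `st` is the tensor-product involution.
The pullback `x ↦ ‖Ψ x‖` is a norm (i.e. `Ψ` is injective), it is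
submultiplicative, satisfies the C*-identity, and is a cross norm. -/
theorem stmt_17 {H₁ H₂ E : Type*}
    [NormedAddCommGroup H₁] [InnerProductSpace ℂ H₁] [CompleteSpace H₁]
    [NormedAddCommGroup H₂] [InnerProductSpace ℂ H₂] [CompleteSpace H₂]
    [NormedAddCommGroup E] [InnerProductSpace ℂ E] [CompleteSpace E]
    (tmul : H₁ →ₗ[ℂ] H₂ →ₗ[ℂ] E)
    (hinner : ∀ (ξ ξ' : H₁) (η η' : H₂),
      ⟪tmul ξ η, tmul ξ' η'⟫_ℂ = ⟪ξ, ξ'⟫_ℂ * ⟪η, η'⟫_ℂ)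
    (hdense : Dense (↑(Submodule.span ℂ {x : E | ∃ ξ η, x = tmul ξ η}) : Set E))
    (A₁ : StarSubalgebra ℂ (H₁ →L[ℂ] H₁)) (hA₁ : IsClosed (A₁ : Set (H₁ →L[ℂ] H₁)))
    (A₂ : StarSubalgebra ℂ (H₂ →L[ℂ] H₂)) (hA₂ : IsClosed (A₂ : Set (H₂ →L[ℂ] H₂)))
    (Ψ : A₁ ⊗[ℂ] A₂ →ₗ[ℂ] (E →L[ℂ] E))
    (hΨ : ∀ (a : A₁) (b : A₂) (ξ : H₁) (η : H₂),
      Ψ (a ⊗ₜ b) (tmul ξ η) = tmul ((a : H₁ →L[ℂ] H₁) ξ) ((b : H₂ →L[ℂ] H₂) η))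
    (st : A₁ ⊗[ℂ] A₂ →+ A₁ ⊗[ℂ] A₂)
    (hst : ∀ (a : A₁) (b : A₂), st (a ⊗ₜ b) = (star a) ⊗ₜ (star b)) :
    Function.Injective Ψ ∧
    (∀ x y : A₁ ⊗[ℂ] A₂, ‖Ψ (x * y)‖ ≤ ‖Ψ x‖ * ‖Ψ y‖) ∧
    (∀ x : A₁ ⊗[ℂ] A₂, ‖Ψ (st x * x)‖ = ‖Ψ x‖ ^ 2) ∧
    (∀ (a : A₁) (b : A₂),
      ‖Ψ (a ⊗ₜ b)‖ = ‖(a : H₁ →L[ℂ] H₁)‖ * ‖(b : H₂ →L[ℂ] H₂)‖) := by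
  exact stmt_17_general tmul hinner hdense
    (A₁.subtype : A₁ →ₙₐ[ℂ] H₁ →L[ℂ] H₁) Subtype.val_injective
    (fun a ξ ξ' ↦ ContinuousLinearMap.adjoint_inner_left (a : H₁ →L[ℂ] H₁) ξ' ξ)
    (A₂.subtype : A₂ →ₙₐ[ℂ] H₂ →L[ℂ] H₂) Subtype.val_injective
    (fun b η η' ↦ ContinuousLinearMap.adjoint_inner_left (b : H₂ →L[ℂ] H₂) η' η) Ψ hΨ st hst
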